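/- Let μ be a Borel probability measure on Ω absolutely continuous with respect to d-dimensional Lebesgue measure, and let ν be a Borel probability measure on Ω with spt(ν) ⊂ M, where M is a C¹ submanifold of ℝ^d of dimension m ≤ d − 2. Let u0 be a Kantorovich potential for W1(μ,ν). Then every optimal transport map T0 for W1(μ,ν) satisfies, for μ-almost every x ∈ Ω, T0(x) = x − α(x)·∇u0(x) (where in particular u0 is differentiable μ-almost everywhere at points with α(x) > 0, and at points with α(x) = 0 the formula reads T0(x) = x). -/

import Mathlib

open MeasureTheory Set

noncomputable section

/-- The Wasserstein 1 distance between two Borel probability measures, defined as the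
infimum of the transport cost over all couplings. -/
def W1 {d : ℕ} (μ ν : Measure (EuclideanSpace ℝ (Fin d))) : ℝ :=
  sInf {c | ∃ γ : Measure (EuclideanSpace ℝ (Fin d) × EuclideanSpace ℝ (Fin d)),
    IsProbabilityMeasure γ ∧ γ.map Prod.fst = μ ∧ γ.map Prod.snd = ν ∧
    c = ∫ p, ‖p.1 - p.2‖ ∂γ}

/-- `u0` is a Kantorovich potential for `W1(μ, ν)`: it is 1-Lipschitz on Ω and achieves
the supremum in the dual problem. -/
def IsKantorovichPotential {d : ℕ} (Ω : Set (EuclideanSpace ℝ (Fin d)))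
    (μ ν : Measure (EuclideanSpace ℝ (Fin d))) (u0 : EuclideanSpace ℝ (Fin d) → ℝ) : Prop :=
  LipschitzOnWith 1 u0 Ω ∧
  ∀ u : EuclideanSpace ℝ (Fin d) → ℝ, LipschitzOnWith 1 u Ω →
    ∫ x, u x ∂μ - ∫ x, u x ∂ν ≤ ∫ x, u0 x ∂μ - ∫ x, u0 x ∂ν

/-- `T` is an optimal transport map for `W1(μ, ν)`: a Borel map from Ω to Ω pushing μ
forward to ν whose transport cost equals `W1 μ ν`. -/
def IsOptimalMap {d : ℕ} (Ω : Set (EuclideanSpace ℝ (Fin d)))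
    (μ ν : Measure (EuclideanSpace ℝ (Fin d)))
    (T : EuclideanSpace ℝ (Fin d) → EuclideanSpace ℝ (Fin d)) : Prop :=
  Measurable T ∧ MapsTo T Ω Ω ∧ μ.map T = ν ∧ ∫ x, ‖x - T x‖ ∂μ = W1 μ ν

/-- `rayLow Ω u0 x` (denoted α in the paper): the distance from `x` to the lower
endpoint of a transport ray through `x`. -/
def rayLow {d : ℕ} (Ω : Set (EuclideanSpace ℝ (Fin d)))
    (u0 : EuclideanSpace ℝ (Fin d) → ℝ) (x : EuclideanSpace ℝ (Fin d)) : ℝ :=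
  sSup {r | ∃ z ∈ Ω, u0 x - u0 z = ‖x - z‖ ∧ r = ‖x - z‖}

/-- The support of a Borel measure: the set of points all of whose open neighbourhoods
have positive measure (equivalently, the smallest closed set of full measure). -/
def mSupport {X : Type*} [TopologicalSpace X] [MeasurableSpace X] (μ : Measure X) : Set X :=
  {x | ∀ U : Set X, IsOpen U → x ∈ U → 0 < μ U}

/-- `M` is a C¹ submanifold of `ℝ^d` of dimension `m`: it is covered by countably many
charts `(U i, φ i)` where `φ i` is a C¹ map, injective on `U i`, with inverse Lipschitz
on the image `φ i '' U i`. -/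
def IsC1Submanifold {d : ℕ} (m : ℕ) (M : Set (EuclideanSpace ℝ (Fin d))) : Prop :=
  ∃ (U : ℕ → Set (EuclideanSpace ℝ (Fin d)))
    (φ : ℕ → EuclideanSpace ℝ (Fin d) → EuclideanSpace ℝ (Fin m)),
    M ⊆ ⋃ i, U i ∧
    ∀ i, U i ⊆ M ∧ ContDiffOn ℝ 1 (φ i) (U i) ∧ InjOn (φ i) (U i) ∧
      ∃ (K : NNReal) (ψ : EuclideanSpace ℝ (Fin m) → EuclideanSpace ℝ (Fin d)),
        LipschitzOnWith K ψ (φ i '' U i) ∧ ∀ x ∈ U i, ψ (φ i x) = x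

/-!
Kantorovich–Rubinstein duality forces `u₀ x - u₀ (T₀ x) = |x - T₀ x|` for almost every `x`, so
`T₀ x` lies on a transport ray through `x`, below `x`. A 1-Lipschitz function grows at unit speed
along its rays, hence where it is differentiable its gradient is the direction of every ray, and
`T₀ x = x - t • ∇u₀ x` for some `t ≤ α x`. If `t < α x`, then `T₀ x` is a point of `M` in the
relative interior of a ray. Ray directions at such points are a Lipschitz function of the point (as
long as the distance to the ends of the ray is bounded below), so `x` belongs to a countable union
of Lipschitz images of subsets of `M × ℝ`. This union is negligible because `M × ℝ` has dimension
`m + 1 < d`.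
-/

section KantorovichDuality

open scoped CompactlySupported

lemma exists_measure_integral_eq_of_nonneg {X : Type*} [TopologicalSpace X] [CompactSpace X]
    [T2Space X] [MeasurableSpace X] [BorelSpace X] (g : C(X, ℝ) →ₗ[ℝ] ℝ)
    (hg : ∀ h, 0 ≤ h → 0 ≤ g h) :
    ∃ γ : Measure X, IsFiniteMeasure γ ∧ ∀ h : C(X, ℝ), ∫ x, h x ∂γ = g h := by
  let Λ₀ : C_c(X, ℝ) →ₗ[ℝ] ℝ :=
    { toFun := fun f => g f.toContinuousMap
      map_add' := fun a b => g.map_add a.toContinuousMap b.toContinuousMap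
      map_smul' := fun a b => g.map_smul a b.toContinuousMap }
  let Λ := PositiveLinearMap.mk₀ Λ₀ fun f hf => hg f.toContinuousMap hf
  exact ⟨RealRMK.rieszMeasure Λ, inferInstance, fun h =>
    RealRMK.integral_rieszMeasure Λ ⟨h, .of_compactSpace h⟩⟩

/-- The linear map `(φ, ψ) ↦ φ ⊕ ψ`, where `(φ ⊕ ψ) (x, y) = φ x + ψ y`. On its range the integral
against a coupling is determined by the marginals. -/
def directSum {X Y : Type*} [TopologicalSpace X] [TopologicalSpace Y] :
    (C(X, ℝ) × C(Y, ℝ)) →ₗ[ℝ] C(X × Y, ℝ) where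
  toFun f := f.1.comp .fst + f.2.comp .snd
  map_add' f g := by ext p; simp [add_add_add_comm]
  map_smul' a f := by ext p; simp

@[simp]
lemma directSum_apply {X Y : Type*} [TopologicalSpace X] [TopologicalSpace Y]
    (φ : C(X, ℝ)) (ψ : C(Y, ℝ)) (p : X × Y) : directSum (φ, ψ) p = φ p.1 + ψ p.2 := rfl

/-- The convex cone generated by the nonnegative functions and a given function `f`: the functionals
nonnegative on it are the positive ones that are nonnegative at `f`. -/
def nonnegConeWith {X : Type*} [TopologicalSpace X] (f : C(X, ℝ)) : PointedCone ℝ C(X, ℝ) where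
  carrier := {h | ∃ t : ℝ, 0 ≤ t ∧ t • f ≤ h}
  zero_mem' := ⟨0, le_rfl, by simp⟩
  add_mem' := by
    rintro h₁ h₂ ⟨t₁, ht₁, hle₁⟩ ⟨t₂, ht₂, hle₂⟩
    exact ⟨t₁ + t₂, add_nonneg ht₁ ht₂, by rw [add_smul]; exact add_le_add hle₁ hle₂⟩
  smul_mem' := by
    rintro ⟨a, ha⟩ h ⟨t, ht, hle⟩
    refine ⟨a * t, mul_nonneg ha ht, fun x => ?_⟩
    simpa [mul_assoc] using mul_le_mul_of_nonneg_left (hle x) ha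

lemma integrable_continuousMap {X : Type*} [TopologicalSpace X] [CompactSpace X]
    [MeasurableSpace X] [BorelSpace X] (μ : Measure X) [IsFiniteMeasure μ] (h : C(X, ℝ)) :
    Integrable h μ :=
  h.continuous.integrable_of_hasCompactSupport (.of_compactSpace h)

/-- Integration against a finite measure, as a linear functional on continuous functions. -/
def integralLinear {X : Type*} [TopologicalSpace X] [CompactSpace X]
    [MeasurableSpace X] [BorelSpace X] (μ : Measure X) [IsFiniteMeasure μ] : C(X, ℝ) →ₗ[ℝ] ℝ where
  toFun h := ∫ x, h x ∂μ
  map_add' f g := integral_add (integrable_continuousMap μ f) (integrable_continuousMap μ g)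
  map_smul' a f := integral_const_mul a f

variable {X Y : Type*} [MetricSpace X] [CompactSpace X] [MeasurableSpace X] [BorelSpace X]
  [MetricSpace Y] [CompactSpace Y] [MeasurableSpace Y] [BorelSpace Y]
  {μ : Measure X} {ν : Measure Y} [IsProbabilityMeasure μ] [IsProbabilityMeasure ν]

lemma integral_directSum_prod (φ : C(X, ℝ)) (ψ : C(Y, ℝ)) :
    ∫ p, directSum (φ, ψ) p ∂μ.prod ν = ∫ x, φ x ∂μ + ∫ y, ψ y ∂ν := by
  simp only [directSum_apply]
  rw [integral_add ((integrable_continuousMap μ φ).comp_fst ν)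
    ((integrable_continuousMap ν ψ).comp_snd μ), integral_fun_fst, integral_fun_snd]
  simp

lemma integral_directSum_nonneg {c : C(X × Y, ℝ)} {D t : ℝ}
    (hD : ∀ (φ : C(X, ℝ)) (ψ : C(Y, ℝ)), directSum (φ, ψ) ≤ c → ∫ x, φ x ∂μ + ∫ y, ψ y ∂ν ≤ D)
    (ht : 0 ≤ t) {φ : C(X, ℝ)} {ψ : C(Y, ℝ)}
    (h : t • (.const _ D - c) ≤ directSum (φ, ψ)) : 0 ≤ ∫ x, φ x ∂μ + ∫ y, ψ y ∂ν := by
  rcases ht.eq_or_lt with rfl | ht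
  · rw [← integral_directSum_prod]
    exact integral_nonneg fun p => by simpa using h p
  · let L := integralLinear (μ.prod ν) ∘ₗ directSum
    have hL (f : C(X, ℝ) × C(Y, ℝ)) : L f = ∫ x, f.1 x ∂μ + ∫ y, f.2 y ∂ν :=
      integral_directSum_prod f.1 f.2
    have hle : L ((.const _ D, 0) - t⁻¹ • (φ, ψ)) ≤ D := by
      refine (hL _).trans_le (hD _ _ fun p => ?_)
      have hp : D - c p ≤ t⁻¹ * (φ p.1 + ψ p.2) := (le_inv_mul_iff₀ ht).2 (h p)
      calc directSum ((.const _ D, 0) - t⁻¹ • (φ, ψ)) p = D - t⁻¹ * (φ p.1 + ψ p.2) := by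
            simp [mul_add, sub_eq_add_neg, add_assoc, add_comm]
        _ ≤ c p := sub_le_comm.1 hp
    have hconst : L (.const _ D, 0) = D := by simp [hL]
    rw [map_sub, map_smul, hconst, smul_eq_mul, sub_le_self_iff] at hle
    exact ((mul_nonneg_iff_of_pos_left (inv_pos.2 ht)).1 hle).trans_eq (hL _)

lemma exists_nonneg_functional_extending_marginals {c : C(X × Y, ℝ)} {D : ℝ}
    (hD : ∀ (φ : C(X, ℝ)) (ψ : C(Y, ℝ)), directSum (φ, ψ) ≤ c → ∫ x, φ x ∂μ + ∫ y, ψ y ∂ν ≤ D) :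
    ∃ g : C(X × Y, ℝ) →ₗ[ℝ] ℝ, (∀ h, 0 ≤ h → 0 ≤ g h) ∧
      (∀ φ ψ, g (directSum (φ, ψ)) = ∫ x, φ x ∂μ + ∫ y, ψ y ∂ν) ∧ g c ≤ D := by
  obtain ⟨g, hg_eq, hg_nonneg⟩ := riesz_extension (nonnegConeWith (.const _ D - c))
    ⟨LinearMap.range directSum, (integralLinear (μ.prod ν)).domRestrict _⟩
    (by
      rintro ⟨_, ⟨φ, ψ⟩, rfl⟩ ⟨t, ht, hle⟩
      exact (integral_directSum_nonneg hD ht hle).trans_eq (integral_directSum_prod φ ψ).symm)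
    (fun h => ⟨⟨directSum (.const _ ‖h‖, 0), LinearMap.mem_range_self _ _⟩, 0, le_rfl, fun p => by
      simpa using neg_le_iff_add_nonneg'.1 (neg_le_of_abs_le (h.norm_coe_le_norm p))⟩)
  have hg_sum (φ ψ) : g (directSum (φ, ψ)) = ∫ x, φ x ∂μ + ∫ y, ψ y ∂ν :=
    (hg_eq ⟨_, LinearMap.mem_range_self _ (φ, ψ)⟩).trans (integral_directSum_prod φ ψ)
  refine ⟨g, fun h hh => hg_nonneg h ⟨0, le_rfl, by simpa using hh⟩, hg_sum, ?_⟩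
  have hg_const : g (.const _ D) = D := by
    simpa [show directSum (.const X D, (0 : C(Y, ℝ))) = .const _ D by ext; simp]
      using hg_sum (.const _ D) 0
  have := hg_nonneg _ ⟨1, zero_le_one, (one_smul ℝ _).le⟩
  rw [map_sub, hg_const] at this
  linarith

theorem exists_coupling_integral_le {c : C(X × Y, ℝ)} {D : ℝ}
    (hD : ∀ (φ : C(X, ℝ)) (ψ : C(Y, ℝ)), directSum (φ, ψ) ≤ c → ∫ x, φ x ∂μ + ∫ y, ψ y ∂ν ≤ D) :
    ∃ γ : Measure (X × Y), γ.map Prod.fst = μ ∧ γ.map Prod.snd = ν ∧ ∫ p, c p ∂γ ≤ D := by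
  obtain ⟨g, hg_nonneg, hg_sum, hgc⟩ := exists_nonneg_functional_extending_marginals hD
  obtain ⟨γ, _, hγ⟩ := exists_measure_integral_eq_of_nonneg g hg_nonneg
  have hsum (φ : C(X, ℝ)) (ψ : C(Y, ℝ)) :
      ∫ p, φ p.1 + ψ p.2 ∂γ = ∫ x, φ x ∂μ + ∫ y, ψ y ∂ν := (hγ _).trans (hg_sum φ ψ)
  refine ⟨γ, ?_, ?_, (hγ c).trans_le hgc⟩
  · refine ext_of_forall_integral_eq_of_IsFiniteMeasure fun f => ?_
    rw [integral_map (by fun_prop) (by fun_prop)]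
    simpa using hsum f.toContinuousMap 0
  · refine ext_of_forall_integral_eq_of_IsFiniteMeasure fun f => ?_
    rw [integral_map (by fun_prop) (by fun_prop)]
    simpa using hsum 0 f.toContinuousMap

lemma exists_lipschitzWith_between {X : Type*} [PseudoMetricSpace X] {φ ψ : X → ℝ}
    (h : ∀ x y, φ x + ψ y ≤ dist x y) :
    ∃ u : X → ℝ, LipschitzWith 1 u ∧ ∀ x, φ x ≤ u x ∧ u x ≤ -ψ x := by
  rcases isEmpty_or_nonempty X with hX | hX
  · exact ⟨0, LipschitzWith.const' _, hX.elim⟩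
  have hφ (x y) : φ x ≤ dist x y - ψ y := le_sub_iff_add_le.2 (h x y)
  have hbdd (x) : BddBelow (range fun y => dist x y - ψ y) := ⟨φ x, forall_mem_range.2 (hφ x)⟩
  refine ⟨fun x => ⨅ y, dist x y - ψ y, .of_le_add fun x x' => ?_,
    fun x => ⟨le_ciInf (hφ x), (ciInf_le (hbdd x) x).trans_eq (by simp)⟩⟩
  refine sub_le_iff_le_add.1 (le_ciInf fun y => ?_)
  linarith [ciInf_le (hbdd x) y, dist_triangle x x' y]

theorem exists_coupling_integral_dist_le {μ ν : Measure X} [IsProbabilityMeasure μ]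
    [IsProbabilityMeasure ν] {D : ℝ}
    (hD : ∀ u : X → ℝ, LipschitzWith 1 u → ∫ x, u x ∂μ - ∫ x, u x ∂ν ≤ D) :
    ∃ γ : Measure (X × X), γ.map Prod.fst = μ ∧ γ.map Prod.snd = ν ∧
      ∫ p, dist p.1 p.2 ∂γ ≤ D := by
  refine exists_coupling_integral_le (c := ⟨fun p => dist p.1 p.2, by fun_prop⟩) fun φ ψ hφψ => ?_
  obtain ⟨u, hu, hu_between⟩ := exists_lipschitzWith_between fun x y => hφψ (x, y)
  let U : C(X, ℝ) := ⟨u, hu.continuous⟩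
  calc ∫ x, φ x ∂μ + ∫ x, ψ x ∂ν
      = ∫ x, φ x ∂μ - ∫ x, -ψ x ∂ν := by rw [integral_neg, sub_neg_eq_add]
    _ ≤ ∫ x, u x ∂μ - ∫ x, u x ∂ν :=
      sub_le_sub
        (integral_mono (integrable_continuousMap μ φ) (integrable_continuousMap μ U)
          fun x => (hu_between x).1)
        (integral_mono (integrable_continuousMap ν U) (integrable_continuousMap ν ψ).neg
          fun x => (hu_between x).2)
    _ ≤ D := hD u hu

end KantorovichDuality

section OptimalMap

lemma exists_isProbabilityMeasure_map_val_eq {E : Type*} [MeasurableSpace E] {Ω : Set E}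
    (hΩ : MeasurableSet Ω) {μ : Measure E} [IsProbabilityMeasure μ] (hμΩ : μ Ωᶜ = 0) :
    ∃ μ' : Measure Ω, IsProbabilityMeasure μ' ∧ μ'.map Subtype.val = μ := by
  have hmap : (μ.comap (Subtype.val : Ω → E)).map Subtype.val = μ := by
    rw [map_comap_subtype_coe hΩ, Measure.restrict_eq_self_of_ae_mem hμΩ]
  have : IsProbabilityMeasure ((μ.comap (Subtype.val : Ω → E)).map Subtype.val) := by
    rwa [hmap]
  exact ⟨_, Measure.isProbabilityMeasure_of_map Subtype.val, hmap⟩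

theorem exists_coupling_integral_dist_le_of_isCompact {E : Type*} [MetricSpace E]
    [MeasurableSpace E] [BorelSpace E] {Ω : Set E} (hΩ : IsCompact Ω) {μ ν : Measure E}
    [IsProbabilityMeasure μ] [IsProbabilityMeasure ν] (hμΩ : μ Ωᶜ = 0) (hνΩ : ν Ωᶜ = 0) {D : ℝ}
    (hD : ∀ u : E → ℝ, LipschitzOnWith 1 u Ω → ∫ x, u x ∂μ - ∫ x, u x ∂ν ≤ D) :
    ∃ γ : Measure (E × E), γ.map Prod.fst = μ ∧ γ.map Prod.snd = ν ∧
      ∫ p, dist p.1 p.2 ∂γ ≤ D := by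
  have : CompactSpace Ω := isCompact_iff_compactSpace.1 hΩ
  have hval : MeasurableEmbedding ((↑) : Ω → E) := .subtype_coe hΩ.measurableSet
  obtain ⟨μ', _, rfl⟩ := exists_isProbabilityMeasure_map_val_eq hΩ.measurableSet hμΩ
  obtain ⟨ν', _, rfl⟩ := exists_isProbabilityMeasure_map_val_eq hΩ.measurableSet hνΩ
  obtain ⟨γ, rfl, rfl, hγ_dist⟩ :=
      exists_coupling_integral_dist_le (μ := μ') (ν := ν') (D := D) fun u hu => by
    have hext (x : Ω) : Function.extend Subtype.val u (0 : E → ℝ) x = u x :=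
      Subtype.val_injective.extend_apply u 0 x
    have hext_lip : LipschitzOnWith 1 (Function.extend Subtype.val u 0) Ω :=
      lipschitzOnWith_iff_restrict.2 (by simpa only [domRestrict_def, hext] using hu)
    simpa only [hval.integral_map, hext] using hD _ hext_lip
  refine ⟨γ.map (Prod.map (↑) (↑)), ?_, ?_, ?_⟩
  · rw [Measure.map_map measurable_fst (by fun_prop), Measure.map_map (by fun_prop) (by fun_prop),
      Prod.map_fst']
  · rw [Measure.map_map measurable_snd (by fun_prop), Measure.map_map (by fun_prop) (by fun_prop),
      Prod.map_snd']
  · rwa [(hval.prodMap hval).integral_map]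

lemma integrable_of_continuousOn_of_isCompact {E : Type*} [TopologicalSpace E] [T2Space E]
    [MeasurableSpace E] [BorelSpace E] {K : Set E} (hK : IsCompact K) {μ : Measure E}
    [IsFiniteMeasure μ] (hμK : μ Kᶜ = 0) {f : E → ℝ} (hf : ContinuousOn f K) :
    Integrable f μ := by
  simpa only [IntegrableOn, Measure.restrict_eq_self_of_ae_mem (mem_ae_iff.2 hμK)]
    using hf.integrableOn_compact (μ := μ) hK

variable {d : ℕ} {Ω : Set (EuclideanSpace ℝ (Fin d))} {μ ν : Measure (EuclideanSpace ℝ (Fin d))}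
  [IsProbabilityMeasure μ] [IsProbabilityMeasure ν]
  {u : EuclideanSpace ℝ (Fin d) → ℝ}

lemma IsKantorovichPotential.W1_le (hu : IsKantorovichPotential Ω μ ν u) (hΩ : IsCompact Ω)
    (hμΩ : μ Ωᶜ = 0) (hνΩ : ν Ωᶜ = 0) :
    W1 μ ν ≤ ∫ x, u x ∂μ - ∫ x, u x ∂ν := by
  obtain ⟨γ, hγ_fst, hγ_snd, hγ_dist⟩ :=
    exists_coupling_integral_dist_le_of_isCompact hΩ hμΩ hνΩ hu.2
  have : IsProbabilityMeasure (γ.map Prod.fst) := hγ_fst ▸ inferInstance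
  simp only [dist_eq_norm] at hγ_dist
  refine (csInf_le ⟨0, ?_⟩ ?_).trans hγ_dist
  · rintro _ ⟨γ', -, -, -, rfl⟩
    positivity
  · exact ⟨γ, Measure.isProbabilityMeasure_of_map Prod.fst, hγ_fst, hγ_snd, rfl⟩

lemma IsOptimalMap.ae_sub_eq_norm
    {T : EuclideanSpace ℝ (Fin d) → EuclideanSpace ℝ (Fin d)} (hT : IsOptimalMap Ω μ ν T)
    (hu : IsKantorovichPotential Ω μ ν u) (hΩ : IsCompact Ω) (hμΩ : μ Ωᶜ = 0) (hνΩ : ν Ωᶜ = 0) :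
    ∀ᵐ x ∂μ, u x - u (T x) = ‖x - T x‖ := by
  have hW1 := hu.W1_le hΩ hμΩ hνΩ
  obtain ⟨hT_meas, hTΩ, hT_map, hT_cost⟩ := hT
  have hμ_mem : ∀ᵐ x ∂μ, x ∈ Ω := hμΩ
  have hu_μ : Integrable u μ := integrable_of_continuousOn_of_isCompact hΩ hμΩ hu.1.continuousOn
  have hu_ν : Integrable u (μ.map T) :=
    hT_map ▸ integrable_of_continuousOn_of_isCompact hΩ hνΩ hu.1.continuousOn
  have hu_T : Integrable (fun x => u (T x)) μ := hu_ν.comp_measurable hT_meas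
  have hcost : Integrable (fun x => ‖x - T x‖) μ := by
    refine .of_bound (by fun_prop) (Metric.diam Ω) ?_
    filter_upwards [hμ_mem] with x hx
    rw [norm_norm, ← dist_eq_norm]
    exact Metric.dist_le_diam_of_mem hΩ.isBounded hx (hTΩ hx)
  have hle : (fun x => u x - u (T x)) ≤ᵐ[μ] fun x => ‖x - T x‖ := by
    filter_upwards [hμ_mem] with x hx
    simpa [dist_eq_norm] using (le_abs_self _).trans (hu.1.dist_le_mul x hx (T x) (hTΩ hx))
  refine (integral_eq_iff_of_ae_le (hu_μ.sub hu_T) hcost hle).1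
    ((integral_mono_ae (hu_μ.sub hu_T) hcost hle).antisymm ?_)
  calc ∫ x, ‖x - T x‖ ∂μ = W1 μ ν := hT_cost
    _ ≤ ∫ x, u x ∂μ - ∫ x, u x ∂ν := hW1
    _ = ∫ x, u x ∂μ - ∫ x, u (T x) ∂μ := by
      rw [← hT_map, integral_map hT_meas.aemeasurable hu_ν.1]
    _ = ∫ x, u x - u (T x) ∂μ := (integral_sub hu_μ hu_T).symm

lemma isGreatest_rayLow (hΩ : IsCompact Ω) (hu : ContinuousOn u Ω)
    {x : EuclideanSpace ℝ (Fin d)} (hx : x ∈ Ω) :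
    IsGreatest {r | ∃ z ∈ Ω, u x - u z = ‖x - z‖ ∧ r = ‖x - z‖} (rayLow Ω u x) := by
  have hclosed : IsClosed (Ω ∩ (fun z => u x - u z - ‖x - z‖) ⁻¹' {0}) :=
    ContinuousOn.preimage_isClosed_of_isClosed (by fun_prop) hΩ.isClosed isClosed_singleton
  have hcompact := (hΩ.of_isClosed_subset hclosed inter_subset_left).image
    (f := fun z => ‖x - z‖) (by fun_prop)
  have himage : (fun z => ‖x - z‖) '' (Ω ∩ (fun z => u x - u z - ‖x - z‖) ⁻¹' {0}) =
      {r | ∃ z ∈ Ω, u x - u z = ‖x - z‖ ∧ r = ‖x - z‖} := by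
    ext r
    simp only [mem_image, mem_inter_iff, mem_preimage, mem_singleton_iff, sub_eq_zero, and_assoc,
      mem_ofPred_eq, eq_comm (a := r)]
  rw [himage] at hcompact
  exact hcompact.isGreatest_sSup ⟨0, x, hx, by simp⟩

end OptimalMap

section Rays

open scoped Gradient

/-- `e` is a unit vector along which `u` grows at unit speed from `y`, for the parameters in `I`.
For a `1`-Lipschitz `u` and an interval `I`, this says that `y + I • e` is part of a transport ray
of `u`, on which `u` increases in the direction `e`. -/
def IsRayDirection {E : Type*} [NormedAddCommGroup E] [NormedSpace ℝ E]
    (u : E → ℝ) (I : Set ℝ) (y e : E) : Prop :=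
  ‖e‖ = 1 ∧ ∀ s ∈ I, u (y + s • e) = u y + s

/-- The union of the lines through `M` that extend a ray of `u` having a point of `M` in its
relative interior. -/
def rayLines {E : Type*} [NormedAddCommGroup E] [NormedSpace ℝ E]
    (u : E → ℝ) (M : Set E) : Set E :=
  {x | ∃ y ∈ M, ∃ e, ∃ t : ℝ, ∃ r > 0, IsRayDirection u (Icc (-r) r) y e ∧ x = y + t • e}

lemma sub_le_norm_of_lipschitzWith_one {E : Type*} [SeminormedAddCommGroup E] {u : E → ℝ}
    (hu : LipschitzWith 1 u) (x y : E) : u x - u y ≤ ‖x - y‖ := by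
  simpa [dist_eq_norm] using (le_abs_self _).trans (hu.dist_le_mul x y)

section NormedSpace

variable {E : Type*} [NormedAddCommGroup E] [NormedSpace ℝ E] {u : E → ℝ}

lemma IsRayDirection.mono {I J : Set ℝ} {y e : E} (h : IsRayDirection u J y e) (hIJ : I ⊆ J) :
    IsRayDirection u I y e :=
  ⟨h.1, fun s hs => h.2 s (hIJ hs)⟩

lemma IsRayDirection.shift {I J : Set ℝ} {y e : E} {t : ℝ} (h : IsRayDirection u I y e)
    (ht : t ∈ I) (hJ : ∀ s ∈ J, t + s ∈ I) : IsRayDirection u J (y + t • e) e := by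
  refine ⟨h.1, fun s hs => ?_⟩
  rw [add_assoc, ← add_smul, h.2 _ (hJ s hs), h.2 t ht, add_assoc]

lemma exists_isRayDirection_of_sub_eq_norm (hu : LipschitzWith 1 u) {x z : E} (hxz : x ≠ z)
    (h : u x - u z = ‖x - z‖) :
    ∃ e, IsRayDirection u (Icc (-‖x - z‖) 0) x e ∧ z = x - ‖x - z‖ • e := by
  have hpos : 0 < ‖x - z‖ := norm_sub_pos_iff.2 hxz
  obtain ⟨e, he, hz⟩ : ∃ e : E, ‖e‖ = 1 ∧ z = x - ‖x - z‖ • e :=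
    ⟨‖x - z‖⁻¹ • (x - z), by rw [norm_smul, norm_inv, norm_norm, inv_mul_cancel₀ hpos.ne'],
      by rw [smul_inv_smul₀ hpos.ne', sub_sub_cancel]⟩
  refine ⟨e, ⟨he, fun s hs => le_antisymm ?_ ?_⟩, hz⟩
  · have hlow := sub_le_norm_of_lipschitzWith_one hu (x + s • e) z
    have hdiff : x + s • e - z = (s + ‖x - z‖) • e := by
      conv_lhs => rw [hz]
      module
    rw [hdiff, norm_smul, he, mul_one, Real.norm_of_nonneg (by linarith [hs.1])] at hlow
    linarith
  · have hupp := sub_le_norm_of_lipschitzWith_one hu x (x + s • e)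
    rw [sub_add_cancel_left, norm_neg, norm_smul, he, mul_one, Real.norm_of_nonpos hs.2] at hupp
    linarith

lemma IsRayDirection.mem_rayLines {M : Set E} {x e : E} {a b : ℝ}
    (h : IsRayDirection u (Icc (-a) 0) x e) (hb : 0 < b) (hba : b < a) (hM : x - b • e ∈ M) :
    x ∈ rayLines u M := by
  refine ⟨_, hM, e, b, min b (a - b), lt_min hb (sub_pos.2 hba), ?_, by module⟩
  have hr₁ := min_le_left b (a - b)
  have hr₂ := min_le_right b (a - b)
  simpa only [neg_smul, ← sub_eq_add_neg] using h.shift (t := -b) ⟨by linarith, by linarith⟩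
    fun s hs => ⟨by linarith [hs.1], by linarith [hs.2]⟩

end NormedSpace

section InnerProductSpace

variable {E : Type*} [NormedAddCommGroup E] [InnerProductSpace ℝ E] {u : E → ℝ}

lemma IsRayDirection.gradient_eq [CompleteSpace E] (hu : LipschitzWith 1 u) {I : Set ℝ} {x e : E}
    (h : IsRayDirection u I x e) (hI : UniqueDiffWithinAt ℝ I 0) (hx : DifferentiableAt ℝ u x) :
    ∇ u x = e := by
  have hchain : HasDerivAt (fun s : ℝ => u (x + s • e)) (fderiv ℝ u x e) 0 := by
    have hline : HasDerivAt (fun s : ℝ => x + s • e) e 0 := by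
      simpa using ((hasDerivAt_id (0 : ℝ)).smul_const e).const_add x
    exact HasFDerivAt.comp_hasDerivAt 0 (by simpa using hx.hasFDerivAt) hline
  have hray : HasDerivWithinAt (fun s : ℝ => u (x + s • e)) 1 I 0 :=
    ((hasDerivAt_id (0 : ℝ)).const_add (u x)).hasDerivWithinAt.congr h.2 (by simp)
  have hinner : inner ℝ (∇ u x) e = 1 :=
    inner_gradient_left.trans (hI.eq_deriv _ hchain.hasDerivWithinAt hray)
  have hnorm : ‖∇ u x‖ ≤ 1 := by
    simpa [gradient] using norm_fderiv_le_of_lipschitz ℝ (x₀ := x) hu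
  exact eq_of_norm_le_re_inner_eq_norm_sq (𝕜 := ℝ) (by rwa [h.1]) (by simp [hinner, h.1])

lemma isRayDirection_gradient_of_sub_eq_norm [CompleteSpace E] (hu : LipschitzWith 1 u) {x z : E}
    (hx : DifferentiableAt ℝ u x) (hxz : x ≠ z) (h : u x - u z = ‖x - z‖) :
    IsRayDirection u (Icc (-‖x - z‖) 0) x (∇ u x) ∧ z = x - ‖x - z‖ • ∇ u x := by
  obtain ⟨e, he, hz⟩ := exists_isRayDirection_of_sub_eq_norm hu hxz h
  have hpos : -‖x - z‖ < 0 := neg_lt_zero.2 (norm_sub_pos_iff.2 hxz)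
  rw [he.gradient_eq hu (uniqueDiffOn_Icc hpos 0 ⟨hpos.le, le_rfl⟩) hx]
  exact ⟨he, hz⟩

lemma eq_sub_smul_gradient_of_notMem_rayLines [CompleteSpace E] (hu : LipschitzWith 1 u)
    {M : Set E} {x y z : E} (hx : DifferentiableAt ℝ u x) (hxM : x ∉ M) (hx_rays : x ∉ rayLines u M)
    (hy : y ∈ M) (hxy : u x - u y = ‖x - y‖) (hxz : u x - u z = ‖x - z‖)
    (hle : ‖x - y‖ ≤ ‖x - z‖) : y = x - ‖x - z‖ • ∇ u x := by
  have hpos : 0 < ‖x - y‖ := norm_sub_pos_iff.2 fun h => hxM (h ▸ hy)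
  obtain ⟨-, hy_eq⟩ :=
    isRayDirection_gradient_of_sub_eq_norm hu hx (norm_sub_pos_iff.1 hpos) hxy
  obtain ⟨hdir, -⟩ :=
    isRayDirection_gradient_of_sub_eq_norm hu hx (norm_sub_pos_iff.1 (hpos.trans_le hle)) hxz
  rcases hle.eq_or_lt with hnorm | hlt
  · rwa [hnorm] at hy_eq
  · exact absurd (hdir.mem_rayLines hpos hlt (hy_eq ▸ hy)) hx_rays

-- Comparing the four endpoints crosswise, `A + B ≥ 4 * r` for the diagonals `A`, `B` of the
-- parallelogram spanned by `y₁ - y₂` and `r • (e₁ + e₂)`; the parallelogram law does the rest.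
lemma IsRayDirection.mul_norm_sub_le (hu : LipschitzWith 1 u) {r : ℝ} (hr : 0 ≤ r)
    {y₁ y₂ e₁ e₂ : E} (h₁ : IsRayDirection u (Icc (-r) r) y₁ e₁)
    (h₂ : IsRayDirection u (Icc (-r) r) y₂ e₂) : r * ‖e₁ - e₂‖ ≤ ‖y₁ - y₂‖ := by
  have hmem : r ∈ Icc (-r) r := ⟨by linarith, le_rfl⟩
  have hmem_neg : -r ∈ Icc (-r) r := ⟨le_rfl, by linarith⟩
  have hplus := sub_le_norm_of_lipschitzWith_one hu (y₁ + r • e₁) (y₂ + (-r) • e₂)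
  have hminus := sub_le_norm_of_lipschitzWith_one hu (y₂ + r • e₂) (y₁ + (-r) • e₁)
  rw [h₁.2 r hmem, h₂.2 _ hmem_neg,
    show y₁ + r • e₁ - (y₂ + (-r) • e₂) = y₁ - y₂ + r • (e₁ + e₂) by module] at hplus
  rw [h₂.2 r hmem, h₁.2 _ hmem_neg, norm_sub_rev,
    show y₁ + (-r) • e₁ - (y₂ + r • e₂) = y₁ - y₂ - r • (e₁ + e₂) by module] at hminus
  have hpar := parallelogram_law_with_norm ℝ (y₁ - y₂) (r • (e₁ + e₂))
  have hpar_dir := parallelogram_law_with_norm ℝ e₁ e₂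
  rw [norm_smul, Real.norm_of_nonneg hr] at hpar
  rw [h₁.1, h₂.1] at hpar_dir
  refine abs_le_of_sq_le_sq' ?_ (norm_nonneg _) |>.2
  set A := ‖y₁ - y₂ + r • (e₁ + e₂)‖
  set B := ‖y₁ - y₂ - r • (e₁ + e₂)‖
  have hsum : (4 * r) ^ 2 ≤ (A + B) ^ 2 := pow_le_pow_left₀ (by positivity) (by linarith) 2
  nlinarith [sq_nonneg (A - B)]

lemma IsRayDirection.eq (hu : LipschitzWith 1 u) {r : ℝ} (hr : 0 < r) {y e₁ e₂ : E}
    (h₁ : IsRayDirection u (Icc (-r) r) y e₁) (h₂ : IsRayDirection u (Icc (-r) r) y e₂) :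
    e₁ = e₂ := by
  have h := h₁.mul_norm_sub_le hu hr.le h₂
  rw [sub_self, norm_zero] at h
  exact sub_eq_zero.1 (norm_le_zero_iff.1 (nonpos_of_mul_nonpos_right h hr))

end InnerProductSpace

end Rays

section NullSets

open scoped NNReal

lemma lipschitzOnWith_add_smul {E : Type*} [NormedAddCommGroup E] [NormedSpace ℝ E] {S : Set E}
    {e : E → E} {K L : ℝ≥0} (he : LipschitzOnWith K e S) (he_norm : ∀ y ∈ S, ‖e y‖ ≤ 1) :
    LipschitzOnWith (2 + L * K) (fun p : E × ℝ => p.1 + p.2 • e p.1)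
      (S ×ˢ Icc (-(L : ℝ)) L) := by
  refine .of_dist_le_mul fun ⟨y₁, t₁⟩ ⟨hy₁, ht₁⟩ ⟨y₂, t₂⟩ ⟨hy₂, _⟩ => ?_
  have hdist_y : ‖y₁ - y₂‖ ≤ dist (y₁, t₁) (y₂, t₂) := (dist_eq_norm y₁ y₂) ▸ le_max_left _ _
  have hdist_t : |t₁ - t₂| ≤ dist (y₁, t₁) (y₂, t₂) := le_max_right _ _
  have hdist_e : ‖e y₁ - e y₂‖ ≤ K * dist (y₁, t₁) (y₂, t₂) := by
    have := he.dist_le_mul y₁ hy₁ y₂ hy₂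
    rw [dist_eq_norm, dist_eq_norm] at this
    exact this.trans (by gcongr)
  calc dist (y₁ + t₁ • e y₁) (y₂ + t₂ • e y₂)
      = ‖(y₁ - y₂) + (t₁ - t₂) • e y₂ + t₁ • (e y₁ - e y₂)‖ := by
        rw [dist_eq_norm]; congr 1; module
    _ ≤ ‖y₁ - y₂‖ + |t₁ - t₂| * ‖e y₂‖ + |t₁| * ‖e y₁ - e y₂‖ := by
        simpa only [norm_smul, Real.norm_eq_abs] using
          norm_add₃_le (a := y₁ - y₂) (b := (t₁ - t₂) • e y₂) (c := t₁ • (e y₁ - e y₂))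
    _ ≤ dist (y₁, t₁) (y₂, t₂) + dist (y₁, t₁) (y₂, t₂) * 1
          + L * (K * dist (y₁, t₁) (y₂, t₂)) := by
        gcongr
        exacts [he_norm y₂ hy₂, abs_le.2 ht₁]
    _ = (2 + L * K : ℝ≥0) * dist (y₁, t₁) (y₂, t₂) := by push_cast; ring

section NormedSpace

variable {E : Type*} [NormedAddCommGroup E] [NormedSpace ℝ E] [FiniteDimensional ℝ E]
  [MeasurableSpace E] [BorelSpace E] (μ : Measure E) [μ.IsAddHaarMeasure] {M : Set E}

lemma addHaar_image_eq_zero_of_lipschitzOnWith {X : Type*} [EMetricSpace X] [MeasurableSpace X]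
    [BorelSpace X] {K : ℝ≥0} {f : X → E} {s : Set X} (hf : LipschitzOnWith K f s)
    (hs : μH[Module.finrank ℝ E] s = 0) : μ (f '' s) = 0 := by
  refine Measure.absolutelyContinuous_isAddHaarMeasure μ μH[Module.finrank ℝ E] ?_
  simpa [hs] using hf.hausdorffMeasure_image_le (d := Module.finrank ℝ E) (by positivity)

lemma addHaar_eq_zero_of_hausdorffMeasure_prod_univ_eq_zero
    (hM : μH[Module.finrank ℝ E] (M ×ˢ (univ : Set ℝ)) = 0) : μ M = 0 := by
  have h := addHaar_image_eq_zero_of_lipschitzOnWith μ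
    (LipschitzWith.prod_fst (α := E) (β := ℝ)).lipschitzOnWith hM
  rwa [fst_image_prod _ univ_nonempty] at h

end NormedSpace

variable {E : Type*} [NormedAddCommGroup E] [InnerProductSpace ℝ E] [FiniteDimensional ℝ E]
  [MeasurableSpace E] [BorelSpace E] (μ : Measure E) [μ.IsAddHaarMeasure] {M : Set E} {u : E → ℝ}

lemma addHaar_bounded_rayLines_eq_zero (hu : LipschitzWith 1 u)
    (hM : μH[Module.finrank ℝ E] (M ×ˢ (univ : Set ℝ)) = 0) {r : ℝ} (hr : 0 < r) (L : ℝ≥0) :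
    μ {x | ∃ y ∈ M, ∃ e, ∃ t ∈ Icc (-(L : ℝ)) L,
      IsRayDirection u (Icc (-r) r) y e ∧ x = y + t • e} = 0 := by
  let S := {y ∈ M | ∃ e, IsRayDirection u (Icc (-r) r) y e}
  obtain ⟨e, he⟩ : ∃ e : E → E, ∀ y ∈ S, IsRayDirection u (Icc (-r) r) y (e y) := by
    choose! e he using fun y (hy : y ∈ S) => hy.2
    exact ⟨e, he⟩
  have he_lip : LipschitzOnWith (Real.toNNReal r⁻¹) e S := by
    refine .of_dist_le_mul fun y₁ hy₁ y₂ hy₂ => ?_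
    rw [Real.coe_toNNReal _ (inv_pos.2 hr).le, dist_eq_norm, dist_eq_norm, le_inv_mul_iff₀ hr]
    exact (he y₁ hy₁).mul_norm_sub_le hu hr.le (he y₂ hy₂)
  refine measure_mono_null ?_ (addHaar_image_eq_zero_of_lipschitzOnWith μ
    (lipschitzOnWith_add_smul (L := L) he_lip fun y hy => (he y hy).1.le)
    (measure_mono_null (prod_mono (sep_subset _ _) (subset_univ _)) hM))
  rintro _ ⟨y, hy, e', t, ht, he', rfl⟩
  have hyS : y ∈ S := ⟨hy, e', he'⟩
  exact ⟨(y, t), ⟨hyS, ht⟩, by simp only [(he y hyS).eq hu hr he']⟩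

theorem addHaar_rayLines_eq_zero (hu : LipschitzWith 1 u)
    (hM : μH[Module.finrank ℝ E] (M ×ˢ (univ : Set ℝ)) = 0) : μ (rayLines u M) = 0 := by
  refine measure_mono_null ?_ (measure_iUnion_null fun n : ℕ =>
    addHaar_bounded_rayLines_eq_zero μ hu hM (Nat.one_div_pos_of_nat (n := n)) n)
  rintro x ⟨y, hy, e, t, r, hr, he, rfl⟩
  obtain ⟨n, hn⟩ := exists_nat_ge (max |t| r⁻¹)
  have hnr : 1 / (n + 1 : ℝ) ≤ r := by
    rw [one_div]
    exact inv_le_of_inv_le₀ hr (((le_max_right _ _).trans hn).trans (by linarith))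
  exact mem_iUnion.2 ⟨n, y, hy, e, t, abs_le.1 ((le_max_left _ _).trans hn),
    he.mono (Icc_subset_Icc (neg_le_neg hnr) hnr), rfl⟩

end NullSets

section Submanifold

lemma IsC1Submanifold.dimH_prod_univ_le {d m : ℕ} {M : Set (EuclideanSpace ℝ (Fin d))}
    (hM : IsC1Submanifold m M) : dimH (M ×ˢ (univ : Set ℝ)) ≤ m + 1 := by
  obtain ⟨U, φ, hcover, hchart⟩ := hM
  choose _ _ _ K ψ hψ hψφ using hchart
  let Ψ (i) : EuclideanSpace ℝ (Fin m) × ℝ → EuclideanSpace ℝ (Fin d) × ℝ :=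
    fun p => (ψ i p.1, p.2)
  have hΨ (i) : LipschitzOnWith (max (K i * 1) 1) (Ψ i) ((φ i '' U i) ×ˢ univ) :=
    ((hψ i).comp LipschitzWith.prod_fst.lipschitzOnWith fun _ hp => hp.1).prodMk
      LipschitzWith.prod_snd.lipschitzOnWith
  have hcover_prod : M ×ˢ (univ : Set ℝ) ⊆ ⋃ i, Ψ i '' ((φ i '' U i) ×ˢ univ) := by
    rintro ⟨y, t⟩ ⟨hy, -⟩
    obtain ⟨i, hi⟩ := mem_iUnion.1 (hcover hy)
    exact mem_iUnion.2 ⟨i, (φ i y, t), ⟨mem_image_of_mem _ hi, trivial⟩, by simp [Ψ, hψφ i y hi]⟩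
  refine (dimH_mono hcover_prod).trans ((dimH_iUnion _).trans_le (iSup_le fun i => ?_))
  calc dimH (Ψ i '' ((φ i '' U i) ×ˢ univ))
      ≤ dimH ((φ i '' U i) ×ˢ (univ : Set ℝ)) := (hΨ i).dimH_image_le
    _ ≤ dimH (univ : Set (EuclideanSpace ℝ (Fin m) × ℝ)) := dimH_mono (subset_univ _)
    _ = m + 1 := by simp [Real.dimH_univ_eq_finrank]

lemma IsC1Submanifold.hausdorffMeasure_prod_univ_eq_zero {d m : ℕ}
    {M : Set (EuclideanSpace ℝ (Fin d))} (hM : IsC1Submanifold m M) {s : ℕ} (hs : m + 1 < s) :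
    μH[s] (M ×ˢ (univ : Set ℝ)) = 0 := by
  have hdim : dimH (M ×ˢ (univ : Set ℝ)) < (s : NNReal) :=
    hM.dimH_prod_univ_le.trans_lt (by exact_mod_cast hs)
  simpa using hausdorffMeasure_of_dimH_lt hdim

lemma ae_mem_mSupport {X : Type*} [TopologicalSpace X] [HereditarilyLindelofSpace X]
    [MeasurableSpace X] (μ : Measure X) : ∀ᵐ x ∂μ, x ∈ mSupport μ := by
  filter_upwards [Measure.support_mem_ae (μ := μ)] with x hx U hU hxU
  exact (Measure.mem_support_iff_forall x).1 hx U (hU.mem_nhds hxU)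

end Submanifold

open scoped Gradient in
theorem stmt10_general {d : ℕ} {Ω : Set (EuclideanSpace ℝ (Fin d))} (hΩ : IsCompact Ω)
    {μ ν : Measure (EuclideanSpace ℝ (Fin d))} [IsProbabilityMeasure μ] [IsProbabilityMeasure ν]
    (hμΩ : μ Ωᶜ = 0) (hνΩ : ν Ωᶜ = 0) (hac : μ ≪ volume) {M : Set (EuclideanSpace ℝ (Fin d))}
    (hM : μH[d] (M ×ˢ (univ : Set ℝ)) = 0) (hνM : ν Mᶜ = 0)
    {u0 : EuclideanSpace ℝ (Fin d) → ℝ} (hu0 : IsKantorovichPotential Ω μ ν u0)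
    {T0 : EuclideanSpace ℝ (Fin d) → EuclideanSpace ℝ (Fin d)} (hT0 : IsOptimalMap Ω μ ν T0) :
    ∀ᵐ x ∂μ, 0 < rayLow Ω u0 x ∧ ∃ g, HasGradientWithinAt u0 g Ω x ∧
      T0 x = x - rayLow Ω u0 x • g := by
  obtain ⟨u, hu, heq⟩ := hu0.1.extend_real
  replace hM : μH[Module.finrank ℝ (EuclideanSpace ℝ (Fin d))] (M ×ˢ (univ : Set ℝ)) = 0 := by
    rwa [finrank_euclideanSpace_fin]
  have hμ_mem : ∀ᵐ x ∂μ, x ∈ Ω := hμΩ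
  have hT_mem : ∀ᵐ x ∂μ, T0 x ∈ M := ae_of_ae_map hT0.1.aemeasurable (hT0.2.2.1.symm ▸ hνM)
  have hnotMem : ∀ᵐ x ∂μ, x ∉ M := measure_eq_zero_iff_ae_notMem.1
    (hac (addHaar_eq_zero_of_hausdorffMeasure_prod_univ_eq_zero volume hM))
  have hnot_rayLines : ∀ᵐ x ∂μ, x ∉ rayLines u M := measure_eq_zero_iff_ae_notMem.1
    (hac (addHaar_rayLines_eq_zero volume hu hM))
  filter_upwards [hμ_mem, hT_mem, hnotMem, hnot_rayLines, hac.ae_le hu.ae_differentiableAt,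
    hT0.ae_sub_eq_norm hu0 hΩ hμΩ hνΩ] with x hx hTx hxM hx_rays hdiff hT_ray
  obtain ⟨⟨z, hz, hz_ray, hz_low⟩, hle⟩ := isGreatest_rayLow hΩ hu0.1.continuousOn hx
  have hT_le : ‖x - T0 x‖ ≤ rayLow Ω u0 x := hle ⟨_, hT0.2.1 hx, hT_ray, rfl⟩
  have hpos : 0 < rayLow Ω u0 x :=
    (norm_sub_pos_iff.2 fun h : x = T0 x => hxM (h ▸ hTx)).trans_le hT_le
  rw [heq hx, heq (hT0.2.1 hx)] at hT_ray
  rw [heq hx, heq hz] at hz_ray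
  rw [hz_low] at hT_le hpos ⊢
  exact ⟨hpos, ∇ u x, hdiff.hasGradientAt.hasFDerivAt.hasFDerivWithinAt.congr heq (heq hx),
    eq_sub_smul_gradient_of_notMem_rayLines hu hdiff hxM hx_rays hTx hT_ray hz_ray hT_le⟩

theorem stmt10 {d : ℕ} (hd : 1 ≤ d) (Ω : Set (EuclideanSpace ℝ (Fin d)))
    (hΩc : IsCompact Ω) (hΩv : Convex ℝ Ω)
    (μ ν : Measure (EuclideanSpace ℝ (Fin d)))
    [IsProbabilityMeasure μ] [IsProbabilityMeasure ν]
    (hμΩ : μ Ωᶜ = 0) (hνΩ : ν Ωᶜ = 0) (hac : μ ≪ volume)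
    (m : ℕ) (hm : m + 2 ≤ d) (M : Set (EuclideanSpace ℝ (Fin d)))
    (hM : IsC1Submanifold m M) (hspt : mSupport ν ⊆ M)
    (u0 : EuclideanSpace ℝ (Fin d) → ℝ) (hu0 : IsKantorovichPotential Ω μ ν u0)
    (T0 : EuclideanSpace ℝ (Fin d) → EuclideanSpace ℝ (Fin d))
    (hT0 : IsOptimalMap Ω μ ν T0) :
    ∀ᵐ x ∂μ, (rayLow Ω u0 x = 0 → T0 x = x) ∧
      (rayLow Ω u0 x ≠ 0 → ∃ g : EuclideanSpace ℝ (Fin d),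
        HasGradientWithinAt u0 g Ω x ∧ T0 x = x - rayLow Ω u0 x • g) := by
  filter_upwards [stmt10_general hΩc hμΩ hνΩ hac (hM.hausdorffMeasure_prod_univ_eq_zero hm)
    ((ae_mem_mSupport ν).mono fun _ h => hspt h) hu0 hT0] with x ⟨hpos, hx⟩
  exact ⟨fun h => absurd h hpos.ne', fun _ => hx⟩
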